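/- Let q be a prime power with q ≡ 1 (mod 20) and let β be a primitive 5th root of unity in F_q. Then (q,10) gives a 3-design if and only if χ(1+β) = −1, where χ is the quadratic residue character of F_q. -/

import Mathlib

/-!
Setting: `F` is a finite field of order `q`. The projective line `PG(1,q)` is
modelled as `Projectivization F (Fin 2 → F)`. Since scalar matrices act trivially
on the projective line, the images of a set under all elements of `SL(2,F)` form
exactly its `PSL(2,F)`-orbit; `mapSL g` is the map of the projective line induced
by `g : SL(2,F)`. For `k ∣ q - 1`, the unique subgroup of order `k` of `Fˣ` is the
set of `k`-th roots of unity `{x : F | x ^ k = 1}`, embedded into the projective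
line via `x ↦ [x : 1]`. `(q, k)` gives a 3-design iff there is `lam > 0` such that
every 3-subset of the projective line lies in exactly `lam` blocks of the orbit.
-/

noncomputable section

open Matrix

/-- The point at infinity `[1 : 0]` of the projective line over `F`. -/
def inftyPt (F : Type) [Field F] : Projectivization F (Fin 2 → F) :=
  Projectivization.mk F ![1, 0] (by
    intro h
    simpa using congrFun h 0)

/-- The embedding of `F` into the projective line, `x ↦ [x : 1]`. -/
def embedPt (F : Type) [Field F] (x : F) : Projectivization F (Fin 2 → F) :=
  Projectivization.mk F ![x, 1] (by
    intro h
    simpa using congrFun h 1)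

/-- The action of `g : SL(2,F)` on the projective line (as linear fractional
transformation). -/
def mapSL {F : Type} [Field F] (g : Matrix.SpecialLinearGroup (Fin 2) F) :
    Projectivization F (Fin 2 → F) → Projectivization F (Fin 2 → F) :=
  Projectivization.map (Matrix.SpecialLinearGroup.toLin' g : (Fin 2 → F) →ₗ[F] (Fin 2 → F))
    (Matrix.SpecialLinearGroup.toLin' g).injective

/-- The starter block: the unique subgroup of order `k` of `Fˣ` (the `k`-th roots
of unity, for `k ∣ q - 1`), regarded as a subset of the projective line. -/
def starterB (F : Type) [Field F] (k : ℕ) : Set (Projectivization F (Fin 2 → F)) :=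
  embedPt F '' {x : F | x ^ k = 1}

/-- The `PSL(2,F)`-orbit `GB` of the starter block. -/
def designBlocks (F : Type) [Field F] (k : ℕ) :
    Set (Set (Projectivization F (Fin 2 → F))) :=
  {S | ∃ g : Matrix.SpecialLinearGroup (Fin 2) F, S = mapSL g '' starterB F k}

/-- `GB` is the block set of a `3-(q+1, k, lam)` design: `lam` is positive and every
3-subset of the projective line is contained in exactly `lam` blocks. -/
def isThreeDesign (F : Type) [Field F] (k lam : ℕ) : Prop :=
  0 < lam ∧
    ∀ T : Finset (Projectivization F (Fin 2 → F)), T.card = 3 →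
      {S ∈ designBlocks F k | (T : Set (Projectivization F (Fin 2 → F))) ⊆ S}.ncard = lam

/-- `(q, k)` gives a 3-design. -/
def gives3Design (F : Type) [Field F] (k : ℕ) : Prop :=
  ∃ lam : ℕ, isThreeDesign F k lam

/-!
The product of the three pairwise determinants of representatives of `(p₁, p₂, p₃)` is, up to
squares, well defined, and `g ∈ GL(2, q)` multiplies it by `det g ^ 3`. Hence `SL(2, q)` has exactly
two orbits on ordered triples of distinct points, distinguished by the quadratic character of that
product (the orientation), and an element of nonsquare determinant swaps them. Counting incidences
between triples and blocks with the orientation as weight shows that the orbit of a block `B` is a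
3-design iff the orientations of the triples from `B` sum to zero.

For `B = ⟨ζ⟩` of order `n` with `ζ` a square, the orientations depend only on the values
`χ(1 - ζ ^ i)`. For `ζ = -β` these are `0`, `χ(2)`, `a = χ(1 - β)`, `b = χ(1 - β ^ 2)` and
`a b = χ(1 + β)`, and the orientation sum is `10 · 12 (a + b) (2 + χ(2))`, which vanishes iff
`a b = -1`.
-/

open scoped LinearAlgebra.Projectivization Pointwise MatrixGroups
open MulAction

section OrbitCounting

variable {G Y Z : Type*} [Group G] [MulAction G Y] [MulAction G Z] {r : Y → Z → Prop}

theorem smul_mem_smul_cube_iff (g : G) (t : Y × Y × Y) (S : Set Y) :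
    g • t ∈ (g • S) ×ˢ (g • S) ×ˢ (g • S) ↔ t ∈ S ×ˢ S ×ˢ S := by
  simp only [Set.mem_prod, Prod.smul_fst, Prod.smul_snd, Set.smul_mem_smul_set_iff]

theorem ncard_orbit_rel_smul (hr : ∀ (g : G) y z, r (g • y) (g • z) ↔ r y z) (a : Z) (g : G)
    (y : Y) : {z ∈ orbit G a | r (g • y) z}.ncard = {z ∈ orbit G a | r y z}.ncard := by
  have h_image : {z ∈ orbit G a | r (g • y) z} = (g • ·) '' {z ∈ orbit G a | r y z} := by
    ext z
    refine ⟨fun ⟨hz, hyz⟩ ↦ ⟨g⁻¹ • z, ⟨mapsTo_smul_orbit g⁻¹ a hz, ?_⟩, smul_inv_smul g z⟩, ?_⟩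
    · rwa [← hr g, smul_inv_smul]
    · rintro ⟨z, ⟨hz, hyz⟩, rfl⟩
      exact ⟨mapsTo_smul_orbit g a hz, (hr g y z).2 hyz⟩
  rw [h_image, Set.ncard_image_of_injective _ (MulAction.injective g)]

theorem sum_mul_ncard_orbit_rel {R : Type*} [CommSemiring R] [Fintype Y] [Finite Z]
    (hr : ∀ (g : G) y z, r (g • y) (g • z) ↔ r y z) {w : Y → R}
    (hw : ∀ (g : G) y, w (g • y) = w y) (a : Z) [DecidablePred (r · a)] :
    ∑ y, w y * ({z ∈ orbit G a | r y z}.ncard : R) =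
      (orbit G a).ncard * ∑ y with r y a, w y := by
  classical
  have := Fintype.ofFinite Z
  have h_const : ∀ z ∈ (orbit G a).toFinset,
      ∑ y, (if r y z then w y else 0) = ∑ y with r y a, w y := by
    intro z hz
    obtain ⟨g, rfl⟩ := Set.mem_toFinset.1 hz
    rw [Finset.sum_filter, ← Equiv.sum_comp (MulAction.toPerm g)]
    simp only [toPerm_apply, hr, hw]
  have h_ncard (y : Y) :
      {z ∈ orbit G a | r y z}.ncard = ((orbit G a).toFinset.filter (r y)).card := by
    rw [← Set.ncard_coe_finset, Finset.coe_filter]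
    simp only [Set.mem_toFinset]
  calc ∑ y, w y * ({z ∈ orbit G a | r y z}.ncard : R)
      = ∑ y, ∑ z ∈ (orbit G a).toFinset, if r y z then w y else 0 := by
        simp only [h_ncard, Finset.card_filter, Nat.cast_sum, Finset.mul_sum, Nat.cast_ite,
          Nat.cast_one, Nat.cast_zero, mul_ite, mul_one, mul_zero]
    _ = ∑ z ∈ (orbit G a).toFinset, ∑ y, if r y z then w y else 0 := Finset.sum_comm
    _ = (orbit G a).ncard * ∑ y with r y a, w y := by
        rw [Finset.sum_congr rfl h_const, Finset.sum_const, nsmul_eq_mul,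
          Set.ncard_eq_toFinset_card']

end OrbitCounting

section PlaneDet

variable {R : Type*} [CommRing R] {K : Type*} [Field K]

/-- The determinant of two vectors of the plane. -/
def planeDet (v w : Fin 2 → R) : R := v 0 * w 1 - v 1 * w 0

theorem planeDet_eq_det (v w : Fin 2 → R) : planeDet v w = (Matrix.of ![v, w]).det := by
  simp [planeDet, det_fin_two]

theorem planeDet_gl_smul (g : GL (Fin 2) R) (v w : Fin 2 → R) :
    planeDet (g • v) (g • w) = g.det * planeDet v w := by
  simp only [planeDet, GeneralLinearGroup.fin_two_smul, cons_val_zero, cons_val_one,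
    GeneralLinearGroup.val_det_apply, det_fin_two]
  ring

theorem mk_ne_mk_iff_planeDet_ne_zero {v w : Fin 2 → K} (hv : v ≠ 0) (hw : w ≠ 0) :
    Projectivization.mk K v hv ≠ Projectivization.mk K w hw ↔ planeDet v w ≠ 0 := by
  rw [← Projectivization.independent_pair_iff_ne,
    Projectivization.independent_mk_iff_LinearIndependent, planeDet_eq_det, ← isUnit_iff_ne_zero,
    ← Matrix.isUnit_iff_isUnit_det]
  exact Matrix.linearIndependent_rows_iff_isUnit (A := Matrix.of ![v, w])

end PlaneDet

section ProjectiveLine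

/-- The projective line `PG(1, F)`, in the encoding of `starterB`. -/
abbrev ProjLine (F : Type) [Field F] : Type := ℙ F (Fin 2 → F)

/-- Ordered triples of points of the projective line. -/
abbrev PointTriple (F : Type) [Field F] : Type := ProjLine F × ProjLine F × ProjLine F

variable {F : Type} [Field F]

theorem exists_gl_smul_eq {p₁ p₂ p₃ : ProjLine F} (h₁₂ : p₁ ≠ p₂) (h₂₃ : p₂ ≠ p₃)
    (h₃₁ : p₃ ≠ p₁) :
    ∃ g : GL (Fin 2) F, g • (inftyPt F, embedPt F 0, embedPt F 1) = (p₁, p₂, p₃) := by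
  induction p₁ using Projectivization.ind with | h u hu
  induction p₂ using Projectivization.ind with | h v hv
  induction p₃ using Projectivization.ind with | h w hw
  rw [mk_ne_mk_iff_planeDet_ne_zero] at h₁₂ h₂₃ h₃₁
  -- The columns of `M` add up to `-planeDet u v • w` by Cramer's rule.
  let M := !![planeDet v w * u 0, planeDet w u * v 0; planeDet v w * u 1, planeDet w u * v 1]
  have hM : M.det ≠ 0 := by
    have : M.det = planeDet u v * planeDet v w * planeDet w u := by
      simp only [M, det_fin_two_of, planeDet]; ring
    rw [this]
    exact mul_ne_zero (mul_ne_zero h₁₂ h₂₃) h₃₁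
  refine ⟨Matrix.GeneralLinearGroup.mkOfDetNeZero M hM, ?_⟩
  simp only [Prod.smul_mk, inftyPt, embedPt, Projectivization.smul_mk, Prod.mk.injEq,
    Projectivization.mk_eq_mk_iff']
  refine ⟨⟨planeDet v w, ?_⟩, ⟨planeDet w u, ?_⟩, ⟨-planeDet u v, ?_⟩⟩ <;>
  · ext i
    fin_cases i <;> simp [M, GeneralLinearGroup.mkOfDetNeZero, planeDet] <;> ring

theorem exists_sl_smul_eq_gl_smul {g : GL (Fin 2) F} (hg : IsSquare (g.det : F)) :
    ∃ s : SL(2, F), ∀ p : ProjLine F, s • p = g • p := by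
  obtain ⟨d, hd⟩ := hg
  have hd₀ : d ≠ 0 := by
    rintro rfl
    exact g.det.ne_zero (by simpa using hd)
  have h_det : (d⁻¹ • (g : Matrix (Fin 2) (Fin 2) F)).det = 1 := by
    rw [det_smul, ← GeneralLinearGroup.val_det_apply, hd, Fintype.card_fin]
    field_simp
  let s : SL(2, F) := ⟨_, h_det⟩
  refine ⟨s, fun p ↦ ?_⟩
  induction p using Projectivization.ind with | h v hv
  rw [Projectivization.smul_mk, Projectivization.smul_mk, Projectivization.mk_eq_mk_iff']
  exact ⟨d⁻¹, (smul_assoc d⁻¹ (g : Matrix (Fin 2) (Fin 2) F) v).symm⟩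

theorem mapSL_eq_smul (g : SL(2, F)) : mapSL g = (g • · : ProjLine F → _) := by
  ext p
  rfl

theorem embedPt_injective : Function.Injective (embedPt F) := by
  intro a b h
  by_contra hab
  refine (mk_ne_mk_iff_planeDet_ne_zero _ _).2 ?_ h
  simpa [planeDet, sub_eq_zero] using hab

theorem designBlocks_eq_orbit (k : ℕ) : designBlocks F k = orbit SL(2, F) (starterB F k) := by
  ext S
  simp only [designBlocks, mapSL_eq_smul, Set.image_smul, Set.mem_ofPred_eq, mem_orbit_iff, eq_comm]

/-- The number of blocks in the `SL(2, F)`-orbit of `B` that contain all three entries of `t`. -/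
def blockCount (B : Set (ProjLine F)) (t : PointTriple F) : ℕ :=
  {S ∈ orbit SL(2, F) B | t ∈ S ×ˢ S ×ˢ S}.ncard

/-- The `SL(2, F)`-orbit of `B` is the block set of a `3`-design of positive index. -/
def OrbitIsThreeDesign (B : Set (ProjLine F)) : Prop :=
  ∃ n > 0, ∀ T : Finset (ProjLine F), T.card = 3 →
    {S ∈ orbit SL(2, F) B | (T : Set (ProjLine F)) ⊆ S}.ncard = n

theorem gives3Design_iff_orbitIsThreeDesign (k : ℕ) :
    gives3Design F k ↔ OrbitIsThreeDesign (starterB F k) := by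
  simp only [gives3Design, isThreeDesign, OrbitIsThreeDesign, designBlocks_eq_orbit, gt_iff_lt]

variable (B : Set (ProjLine F))

theorem blockCount_smul (g : SL(2, F)) (t : PointTriple F) :
    blockCount B (g • t) = blockCount B t :=
  ncard_orbit_rel_smul (r := fun t S ↦ t ∈ S ×ˢ S ×ˢ S) smul_mem_smul_cube_iff B g t

theorem ncard_orbit_insert_subset (p₁ p₂ p₃ : ProjLine F) :
    {S ∈ orbit SL(2, F) B | {p₁, p₂, p₃} ⊆ S}.ncard = blockCount B (p₁, p₂, p₃) := by
  simp only [blockCount, Set.insert_subset_iff, Set.singleton_subset_iff, Set.mem_prod]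

end ProjectiveLine

section TripleSign

variable {F : Type} [Field F] [Fintype F] [DecidableEq F]

/-- The orientation of an ordered triple of points of the projective line: `0` if two of them
coincide, and otherwise the quadratic character of the determinant of any element of `GL(2, F)`
taking `(∞, 0, 1)` to the triple. -/
def tripleSign (t : PointTriple F) : ℤ :=
  quadraticChar F (planeDet t.1.rep t.2.1.rep * planeDet t.2.1.rep t.2.2.rep *
    planeDet t.2.2.rep t.1.rep)

theorem tripleSign_mk {u v w : Fin 2 → F} (hu : u ≠ 0) (hv : v ≠ 0) (hw : w ≠ 0) :
    tripleSign (.mk F u hu, .mk F v hv, .mk F w hw) =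
      quadraticChar F (planeDet u v * planeDet v w * planeDet w u) := by
  obtain ⟨a, ha⟩ := Projectivization.exists_smul_eq_mk_rep F u hu
  obtain ⟨b, hb⟩ := Projectivization.exists_smul_eq_mk_rep F v hv
  obtain ⟨c, hc⟩ := Projectivization.exists_smul_eq_mk_rep F w hw
  have h_smul : planeDet (a • u) (b • v) * planeDet (b • v) (c • w) * planeDet (c • w) (a • u) =
      (a * b * c : F) ^ 2 * (planeDet u v * planeDet v w * planeDet w u) := by
    simp only [planeDet, Pi.smul_apply, Units.smul_def, smul_eq_mul]
    ring
  rw [tripleSign, ← ha, ← hb, ← hc, h_smul, map_mul, quadraticChar_sq_one' (by simp), one_mul]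

theorem tripleSign_embedPt (a b c : F) :
    tripleSign (embedPt F a, embedPt F b, embedPt F c) =
      quadraticChar F ((a - b) * (b - c) * (c - a)) := by
  rw [embedPt, embedPt, embedPt, tripleSign_mk]
  simp [planeDet]

theorem tripleSign_infty_zero_embedPt (c : F) :
    tripleSign (inftyPt F, embedPt F 0, embedPt F c) = quadraticChar F c := by
  rw [inftyPt, embedPt, embedPt, tripleSign_mk]
  simp [planeDet]

theorem tripleSign_ne_zero_iff {p₁ p₂ p₃ : ProjLine F} :
    tripleSign (p₁, p₂, p₃) ≠ 0 ↔ p₁ ≠ p₂ ∧ p₂ ≠ p₃ ∧ p₃ ≠ p₁ := by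
  induction p₁ using Projectivization.ind with | h u hu
  induction p₂ using Projectivization.ind with | h v hv
  induction p₃ using Projectivization.ind with | h w hw
  simp only [tripleSign_mk, mk_ne_mk_iff_planeDet_ne_zero, ne_eq, quadraticChar_eq_zero_iff,
    mul_eq_zero, not_or, and_assoc]

theorem tripleSign_eq_one_or_neg_one {t : PointTriple F} (ht : tripleSign t ≠ 0) :
    tripleSign t = 1 ∨ tripleSign t = -1 :=
  (quadraticChar_isQuadratic F _).resolve_left ht

theorem tripleSign_gl_smul (g : GL (Fin 2) F) (t : PointTriple F) :
    tripleSign (g • t) = quadraticChar F g.det * tripleSign t := by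
  obtain ⟨p₁, p₂, p₃⟩ := t
  induction p₁ using Projectivization.ind with | h u hu
  induction p₂ using Projectivization.ind with | h v hv
  induction p₃ using Projectivization.ind with | h w hw
  have h_cube : g.det * planeDet u v * (g.det * planeDet v w) * (g.det * planeDet w u) =
      (g.det : F) ^ 2 * (g.det * (planeDet u v * planeDet v w * planeDet w u)) := by ring
  simp only [Prod.smul_mk, Projectivization.smul_mk, tripleSign_mk, planeDet_gl_smul]
  rw [h_cube, map_mul, quadraticChar_sq_one' g.det.ne_zero, one_mul, map_mul]

theorem tripleSign_sl_smul (g : SL(2, F)) (t : PointTriple F) :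
    tripleSign (g • t) = tripleSign t := by
  have h_det : (GeneralLinearGroup.det (g : GL (Fin 2) F) : F) = 1 := by simp
  simpa only [h_det, map_one, one_mul] using! tripleSign_gl_smul (g : GL (Fin 2) F) t

theorem exists_sl_smul_eq {t t' : PointTriple F}
    (ht : tripleSign t ≠ 0) (htt' : tripleSign t = tripleSign t') : ∃ g : SL(2, F), g • t = t' := by
  obtain ⟨h₁₂, h₂₃, h₃₁⟩ := tripleSign_ne_zero_iff.1 ht
  obtain ⟨h₁₂', h₂₃', h₃₁'⟩ := tripleSign_ne_zero_iff.1 (htt' ▸ ht)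
  obtain ⟨g, hg⟩ := exists_gl_smul_eq h₁₂ h₂₃ h₃₁
  obtain ⟨g', hg'⟩ := exists_gl_smul_eq h₁₂' h₂₃' h₃₁'
  have h_smul : (g' * g⁻¹) • t = t' := by
    rw [mul_smul, inv_smul_eq_iff.2 hg.symm, hg']
  have h_sq : IsSquare ((g' * g⁻¹).det : F) := by
    rw [← quadraticChar_one_iff_isSquare (Units.ne_zero _)]
    apply mul_right_cancel₀ ht
    rw [← tripleSign_gl_smul, h_smul, ← htt', one_mul]
  obtain ⟨s, hs⟩ := exists_sl_smul_eq_gl_smul h_sq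
  exact ⟨s, by rw [← h_smul]; simp only [Prod.smul_def, hs]⟩

theorem blockCount_eq_of_tripleSign_eq (B : Set (ProjLine F)) {t t' : PointTriple F}
    (ht : tripleSign t ≠ 0) (htt' : tripleSign t = tripleSign t') :
    blockCount B t = blockCount B t' := by
  obtain ⟨g, rfl⟩ := exists_sl_smul_eq ht htt'
  exact (blockCount_smul B g t).symm

theorem exists_gl_tripleSign_smul_eq_neg (hF : ringChar F ≠ 2) :
    ∃ g : GL (Fin 2) F, ∀ t : PointTriple F, tripleSign (g • t) = -tripleSign t := by
  obtain ⟨a, ha⟩ := quadraticChar_exists_neg_one' hF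
  refine ⟨.mkOfDetNeZero !![(a : F), 0; 0, 1] (by simp), fun t ↦ ?_⟩
  rw [tripleSign_gl_smul, GeneralLinearGroup.val_det_apply, GeneralLinearGroup.mkOfDetNeZero]
  simp [ha]

section Sums

variable [Fintype (ProjLine F)]

theorem sum_tripleSign_eq_zero (hF : ringChar F ≠ 2) : ∑ t : PointTriple F, tripleSign t = 0 := by
  obtain ⟨g, hg⟩ := exists_gl_tripleSign_smul_eq_neg hF
  have h_neg : ∑ t : PointTriple F, tripleSign t = -∑ t : PointTriple F, tripleSign t :=
    calc ∑ t : PointTriple F, tripleSign t = ∑ t : PointTriple F, tripleSign (g • t) :=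
          (Equiv.sum_comp (MulAction.toPerm g) _).symm
      _ = -∑ t : PointTriple F, tripleSign t := by simp only [hg, Finset.sum_neg_distrib]
  linarith

theorem two_mul_sum_tripleSign_mul (hF : ringChar F ≠ 2) {f : PointTriple F → ℤ}
    (hf : ∀ t t', tripleSign t ≠ 0 → tripleSign t = tripleSign t' → f t = f t')
    {t₁ t₂ : PointTriple F} (ht₁ : tripleSign t₁ = 1) (ht₂ : tripleSign t₂ = -1) :
    2 * ∑ t : PointTriple F, tripleSign t * f t =
      (f t₁ - f t₂) * ∑ t : PointTriple F, tripleSign t ^ 2 := by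
  have h_term (t) : 2 * (tripleSign t * f t) =
      (f t₁ - f t₂) * tripleSign t ^ 2 + (f t₁ + f t₂) * tripleSign t := by
    by_cases ht : tripleSign t = 0
    · simp [ht]
    rcases tripleSign_eq_one_or_neg_one ht with h | h
    · rw [hf t t₁ ht (h.trans ht₁.symm), h]; ring
    · rw [hf t t₂ ht (h.trans ht₂.symm), h]; ring
  rw [Finset.mul_sum, Finset.sum_congr rfl fun t _ ↦ h_term t, Finset.sum_add_distrib,
    ← Finset.mul_sum, ← Finset.mul_sum, sum_tripleSign_eq_zero hF, mul_zero, add_zero]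

theorem sum_tripleSign_mul_blockCount (B : Finset (ProjLine F)) :
    ∑ t : PointTriple F, tripleSign t * (blockCount B t : ℤ) =
      (orbit SL(2, F) (B : Set (ProjLine F))).ncard * ∑ t ∈ B ×ˢ B ×ˢ B, tripleSign t := by
  classical
  have h_filter : B ×ˢ B ×ˢ B = Finset.univ.filter
      fun t ↦ t ∈ (B : Set (ProjLine F)) ×ˢ (B : Set (ProjLine F)) ×ˢ (B : Set (ProjLine F)) := by
    ext t
    simp
  rw [h_filter]
  exact sum_mul_ncard_orbit_rel (r := fun t S ↦ t ∈ S ×ˢ S ×ˢ S) smul_mem_smul_cube_iff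
    tripleSign_sl_smul _

end Sums

theorem orbitIsThreeDesign_iff_blockCount_eq (B : Finset (ProjLine F)) (hB : 3 ≤ B.card)
    {t₁ t₂ : PointTriple F} (ht₁ : tripleSign t₁ = 1) (ht₂ : tripleSign t₂ = -1) :
    OrbitIsThreeDesign (B : Set (ProjLine F)) ↔ blockCount B t₁ = blockCount B t₂ := by
  classical
  constructor
  · rintro ⟨n, -, hn⟩
    have h_eq (t : PointTriple F) (ht : tripleSign t ≠ 0) : blockCount B t = n := by
      obtain ⟨h₁₂, h₂₃, h₃₁⟩ := tripleSign_ne_zero_iff.1 ht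
      rw [← hn _ (Finset.card_eq_three.2 ⟨_, _, _, h₁₂, h₃₁.symm, h₂₃, rfl⟩)]
      push_cast
      exact (ncard_orbit_insert_subset _ _ _ _).symm
    rw [h_eq t₁ (by simp [ht₁]), h_eq t₂ (by simp [ht₂])]
  · intro h
    have h_eq (T : Finset (ProjLine F)) (hT : T.card = 3) :
        {S ∈ orbit SL(2, F) (B : Set (ProjLine F)) | (T : Set (ProjLine F)) ⊆ S}.ncard =
          blockCount B t₁ := by
      obtain ⟨p₁, p₂, p₃, h₁₂, h₁₃, h₂₃, rfl⟩ := Finset.card_eq_three.1 hT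
      have ht := tripleSign_ne_zero_iff.2 ⟨h₁₂, h₂₃, h₁₃.symm⟩
      push_cast
      rw [ncard_orbit_insert_subset]
      rcases tripleSign_eq_one_or_neg_one ht with h' | h'
      · exact blockCount_eq_of_tripleSign_eq _ ht (h'.trans ht₁.symm)
      · exact (blockCount_eq_of_tripleSign_eq _ ht (h'.trans ht₂.symm)).trans h.symm
    refine ⟨_, ?_, h_eq⟩
    obtain ⟨T, hTB, hT⟩ := Finset.exists_subset_card_eq hB
    rw [← h_eq T hT, gt_iff_lt, Set.ncard_pos]
    exact ⟨B, mem_orbit_self _, by exact_mod_cast hTB⟩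

theorem orbitIsThreeDesign_iff_sum_tripleSign_eq_zero (hF : ringChar F ≠ 2)
    (B : Finset (ProjLine F)) (hB : 3 ≤ B.card) :
    OrbitIsThreeDesign (B : Set (ProjLine F)) ↔ ∑ t ∈ B ×ˢ B ×ˢ B, tripleSign t = 0 := by
  have := Fintype.ofFinite (ProjLine F)
  obtain ⟨c, hc⟩ := quadraticChar_exists_neg_one hF
  obtain ⟨t₁, ht₁⟩ : ∃ t : PointTriple F, tripleSign t = 1 :=
    ⟨_, (tripleSign_infty_zero_embedPt 1).trans (map_one _)⟩
  obtain ⟨t₂, ht₂⟩ : ∃ t : PointTriple F, tripleSign t = -1 :=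
    ⟨_, (tripleSign_infty_zero_embedPt c).trans hc⟩
  have h_orbit : ((orbit SL(2, F) (B : Set (ProjLine F))).ncard : ℤ) ≠ 0 :=
    Nat.cast_ne_zero.2 ((Set.ncard_pos (Set.toFinite _)).2 ⟨_, mem_orbit_self _⟩).ne'
  have h_sq : ∑ t : PointTriple F, tripleSign t ^ 2 ≠ 0 :=
    (Finset.sum_pos' (fun t _ ↦ sq_nonneg _) ⟨t₁, Finset.mem_univ _, by rw [ht₁]; norm_num⟩).ne'
  have h_two : 2 * ((orbit SL(2, F) (B : Set (ProjLine F))).ncard *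
      ∑ t ∈ B ×ˢ B ×ˢ B, tripleSign t) =
        ((blockCount B t₁ : ℤ) - blockCount B t₂) * ∑ t : PointTriple F, tripleSign t ^ 2 := by
    rw [← sum_tripleSign_mul_blockCount]
    exact two_mul_sum_tripleSign_mul hF
      (fun t t' ht htt' ↦ congrArg _ (blockCount_eq_of_tripleSign_eq _ ht htt')) ht₁ ht₂
  calc OrbitIsThreeDesign (B : Set (ProjLine F))
      ↔ (blockCount B t₁ : ℤ) - blockCount B t₂ = 0 := by
        rw [orbitIsThreeDesign_iff_blockCount_eq B hB ht₁ ht₂, sub_eq_zero, Nat.cast_inj]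
    _ ↔ ∑ t ∈ B ×ˢ B ×ˢ B, tripleSign t = 0 := by
        rw [← mul_eq_zero_iff_right h_sq, ← h_two, mul_eq_zero_iff_left two_ne_zero,
          mul_eq_zero_iff_left h_orbit]

end TripleSign

section RootsOfUnity

theorem sum_circulant_triangle {A R : Type*} [AddCommGroup A] [Fintype A] [CommSemiring R]
    (f : A → R) :
    ∑ i, ∑ j, ∑ l, f (j - i) * f (l - j) * f (i - l) =
      Fintype.card A * ∑ x, ∑ y, f x * f y * f (-(x + y)) := by
  have h_rotate (i : A) : ∑ j, ∑ l, f (j - i) * f (l - j) * f (i - l) =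
      ∑ x, ∑ y, f x * f y * f (-(x + y)) := by
    rw [← Equiv.sum_comp (Equiv.addLeft i)]
    refine Finset.sum_congr rfl fun x _ ↦ ?_
    rw [← Equiv.sum_comp (Equiv.addLeft (i + x))]
    refine Finset.sum_congr rfl fun y _ ↦ ?_
    simp only [Equiv.coe_addLeft]
    rw [add_sub_cancel_left, add_sub_cancel_left, add_assoc, sub_add_cancel_left]
  simp only [h_rotate, Finset.sum_const, Finset.card_univ, nsmul_eq_mul]

variable {F : Type} [Field F] {n : ℕ} {ζ : F}

theorem isPrimitiveRoot_neg_of_odd (hF : ringChar F ≠ 2) (hn : Odd n) (hζ : IsPrimitiveRoot ζ n) :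
    IsPrimitiveRoot (-ζ) (2 * n) := by
  have h_two : orderOf (-1 : F) = 2 := by rw [orderOf_neg_one, if_neg hF]
  have h_coprime : (orderOf (-1 : F)).Coprime (orderOf ζ) := by
    rw [h_two, ← hζ.eq_orderOf]
    exact Nat.coprime_two_left.2 hn
  rw [IsPrimitiveRoot.iff_orderOf, ← neg_one_mul,
    (Commute.all (-1) ζ).orderOf_mul_eq_mul_orderOf_of_coprime h_coprime, h_two, ← hζ.eq_orderOf]

theorem starterB_eq_map (hζ : IsPrimitiveRoot ζ n) [NeZero n]
    (h_inj : Function.Injective fun i : Fin n ↦ embedPt F (ζ ^ (i : ℕ))) :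
    starterB F n = (Finset.univ.map ⟨_, h_inj⟩ : Finset (ProjLine F)) := by
  ext p
  simp only [starterB, Finset.coe_map, Function.Embedding.coeFn_mk, Finset.coe_univ,
    Set.image_univ, Set.mem_range, Set.mem_image, Set.mem_ofPred_eq]
  constructor
  · rintro ⟨x, hx, rfl⟩
    obtain ⟨i, hi, rfl⟩ := hζ.eq_pow_of_pow_eq_one hx
    exact ⟨⟨i, hi⟩, rfl⟩
  · rintro ⟨i, rfl⟩
    exact ⟨_, by rw [pow_right_comm, hζ.pow_eq_one, one_pow], rfl⟩

theorem pow_fin_val_add (hζ : ζ ^ n = 1) (i j : Fin n) :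
    ζ ^ ((i + j : Fin n) : ℕ) = ζ ^ (i : ℕ) * ζ ^ (j : ℕ) := by
  rw [Fin.val_add, ← pow_add, ← pow_eq_pow_mod _ hζ]

variable [Fintype F] [DecidableEq F]

theorem quadraticChar_eq_one_of_odd_of_pow_eq_one (hn : Odd n) (hζ : ζ ^ n = 1) :
    quadraticChar F ζ = 1 := by
  obtain ⟨m, rfl⟩ := hn
  have h_sq : ζ = (ζ ^ (m + 1)) ^ 2 := by linear_combination -ζ * hζ
  have hζ₀ : ζ ≠ 0 := by
    rintro rfl
    simp at hζ
  rw [h_sq, quadraticChar_sq_one' (pow_ne_zero _ hζ₀)]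

theorem quadraticChar_pow_sub_pow [NeZero n] (hζ : ζ ^ n = 1) (hχ : quadraticChar F ζ = 1)
    (i j : Fin n) :
    quadraticChar F (ζ ^ (i : ℕ) - ζ ^ (j : ℕ)) =
      quadraticChar F (1 - ζ ^ ((j - i : Fin n) : ℕ)) := by
  have h_factor : ζ ^ (i : ℕ) - ζ ^ (j : ℕ) =
      ζ ^ (i : ℕ) * (1 - ζ ^ ((j - i : Fin n) : ℕ)) := by
    rw [mul_sub, mul_one, ← pow_fin_val_add hζ, add_sub_cancel]
  rw [h_factor, map_mul, map_pow, hχ, one_pow, one_mul]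

theorem gives3Design_iff_sum_quadraticChar_eq_zero (hF : ringChar F ≠ 2) (hn : 3 ≤ n)
    [NeZero n] (hζ : IsPrimitiveRoot ζ n) (hχ : quadraticChar F ζ = 1) :
    gives3Design F n ↔
      ∑ i : Fin n, ∑ j : Fin n, quadraticChar F (1 - ζ ^ (i : ℕ)) *
        quadraticChar F (1 - ζ ^ (j : ℕ)) *
          quadraticChar F (1 - ζ ^ ((-(i + j) : Fin n) : ℕ)) = 0 := by
  have h_inj : Function.Injective fun i : Fin n ↦ embedPt F (ζ ^ (i : ℕ)) := fun i j hij ↦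
    Fin.ext (hζ.pow_inj i.2 j.2 (embedPt_injective hij))
  rw [gives3Design_iff_orbitIsThreeDesign, starterB_eq_map hζ h_inj,
    orbitIsThreeDesign_iff_sum_tripleSign_eq_zero hF _ (by simpa using hn)]
  simp only [Finset.sum_product, Finset.sum_map, Function.Embedding.coeFn_mk, tripleSign_embedPt,
    map_mul, quadraticChar_pow_sub_pow hζ.pow_eq_one hχ]
  rw [sum_circulant_triangle fun i : Fin n ↦ quadraticChar F (1 - ζ ^ (i : ℕ)), Fintype.card_fin,
    mul_eq_zero_iff_left (Nat.cast_ne_zero.2 (NeZero.ne n))]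

end RootsOfUnity

section TenthRoots

/-- The values of `i ↦ χ(1 - ζ ^ i)` at a primitive tenth root of unity `ζ = -β`, in terms of
`a = χ(1 - β)`, `b = χ(1 - β ^ 2)` and `c = χ(2)`. -/
def tenthRootPattern (a b c : ℤ) : Fin 10 → ℤ :=
  ![0, a * b, b, a * b, a, c, a, a * b, b, a * b]

theorem sum_tenthRootPattern {a b c : ℤ} (ha : a = 1 ∨ a = -1) (hb : b = 1 ∨ b = -1)
    (hc : c = 1 ∨ c = -1) :
    ∑ i, ∑ j, tenthRootPattern a b c i * tenthRootPattern a b c j *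
      tenthRootPattern a b c (-(i + j)) = 12 * ((a + b) * (2 + c)) := by
  rcases ha with rfl | rfl <;> rcases hb with rfl | rfl <;> rcases hc with rfl | rfl <;> decide

theorem sum_tenthRootPattern_eq_zero_iff {a b c : ℤ} (ha : a = 1 ∨ a = -1) (hb : b = 1 ∨ b = -1)
    (hc : c = 1 ∨ c = -1) :
    ∑ i, ∑ j, tenthRootPattern a b c i * tenthRootPattern a b c j *
      tenthRootPattern a b c (-(i + j)) = 0 ↔ a * b = -1 := by
  rw [sum_tenthRootPattern ha hb hc]
  rcases ha with rfl | rfl <;> rcases hb with rfl | rfl <;> rcases hc with rfl | rfl <;> norm_num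

variable {F : Type} [Field F] [Fintype F] [DecidableEq F]

theorem quadraticChar_one_sub_eq_of_mul_eq_one (h_neg : quadraticChar F (-1) = 1) {x y : F}
    (hx : quadraticChar F x = 1) (hxy : x * y = 1) :
    quadraticChar F (1 - y) = quadraticChar F (1 - x) := by
  have h_factor : 1 - x = -1 * x * (1 - y) := by linear_combination -hxy
  rw [h_factor, map_mul, map_mul, h_neg, hx, one_mul, one_mul]

theorem quadraticChar_one_add {x : F} (hx : x ≠ 1) :
    quadraticChar F (1 + x) = quadraticChar F (1 - x) * quadraticChar F (1 - x ^ 2) := by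
  have h_factor : (1 - x) * (1 - x ^ 2) = (1 - x) ^ 2 * (1 + x) := by ring
  rw [← map_mul, h_factor, map_mul, quadraticChar_sq_one' (sub_ne_zero.2 hx.symm), one_mul]

theorem quadraticChar_one_sub_neg_pow (h_neg : quadraticChar F (-1) = 1) {β : F}
    (hβ : IsPrimitiveRoot β 5) (i : Fin 10) :
    quadraticChar F (1 - (-β) ^ (i : ℕ)) =
      tenthRootPattern (quadraticChar F (1 - β)) (quadraticChar F (1 - β ^ 2))
        (quadraticChar F 2) i := by
  have h5 := hβ.pow_eq_one
  have h_inv {x y : F} (hx : x ^ 5 = 1) (hxy : x * y = 1) :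
      quadraticChar F (1 - y) = quadraticChar F (1 - x) :=
    quadraticChar_one_sub_eq_of_mul_eq_one h_neg
      (quadraticChar_eq_one_of_odd_of_pow_eq_one (by decide) hx) hxy
  have h_three : quadraticChar F (1 - β ^ 3) = quadraticChar F (1 - β ^ 2) :=
    h_inv (by rw [pow_right_comm, h5, one_pow]) (by rw [← pow_add, h5])
  have h_four : quadraticChar F (1 - β ^ 4) = quadraticChar F (1 - β) :=
    h_inv h5 (by rw [← pow_succ', h5])
  have h_even (m : ℕ) (hm : Even m) :
      quadraticChar F (1 - (-β) ^ m) = quadraticChar F (1 - β ^ (m % 5)) := by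
    rw [hm.neg_pow, pow_eq_pow_mod m h5]
  have h_odd (m : ℕ) (hm : Odd m) (hm5 : ¬ 5 ∣ m) : quadraticChar F (1 - (-β) ^ m) =
      quadraticChar F (1 - β ^ (m % 5)) * quadraticChar F (1 - β ^ (2 * m % 5)) := by
    rw [hm.neg_pow, sub_neg_eq_add, quadraticChar_one_add (mt (hβ.pow_eq_one_iff_dvd m).1 hm5),
      ← pow_mul, mul_comm m, pow_eq_pow_mod m h5, pow_eq_pow_mod (2 * m) h5]
  have h_mid : quadraticChar F (1 - (-β) ^ 5) = quadraticChar F 2 := by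
    rw [Odd.neg_pow (by decide), h5, sub_neg_eq_add, one_add_one_eq_two]
  fin_cases i
  · simp [tenthRootPattern]
  · simpa [tenthRootPattern] using h_odd 1 (by decide) (by decide)
  · simp [tenthRootPattern]
  · simpa [tenthRootPattern, h_three, mul_comm] using h_odd 3 (by decide) (by decide)
  · simpa [tenthRootPattern, h_four] using h_even 4 (by decide)
  · exact h_mid
  · simpa [tenthRootPattern] using h_even 6 (by decide)
  · simpa [tenthRootPattern, h_four, mul_comm] using h_odd 7 (by decide) (by decide)
  · simpa [tenthRootPattern, h_three] using h_even 8 (by decide)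
  · simpa [tenthRootPattern, h_three, h_four] using h_odd 9 (by decide) (by decide)

end TenthRoots

/-- Theorem 4.1, (ii) ↔ (iii): for `q ≡ 1 (mod 20)` and `β` a primitive 5th root
of unity, `(q,10)` gives a 3-design iff `χ(1+β) = -1`. -/
theorem stmt_13 (F : Type) [Field F] [Fintype F] [DecidableEq F]
    (q : ℕ) (hq : Fintype.card F = q) (hq20 : q % 20 = 1)
    (β : F) (hβ : orderOf β = 5) :
    gives3Design F 10 ↔ quadraticChar F (1 + β) = -1 := by
  have hF : ringChar F ≠ 2 := fun h ↦ by
    have := FiniteField.even_card_iff_char_two.1 h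
    omega
  have h_neg : quadraticChar F (-1) = 1 := by
    rw [quadraticChar_one_iff_isSquare (neg_ne_zero.2 one_ne_zero),
      FiniteField.isSquare_neg_one_iff]
    omega
  have hβ' : IsPrimitiveRoot β 5 := hβ ▸ IsPrimitiveRoot.orderOf β
  have h_square : quadraticChar F (-β) = 1 := by
    rw [← neg_one_mul, map_mul, h_neg, one_mul,
      quadraticChar_eq_one_of_odd_of_pow_eq_one (by decide) hβ'.pow_eq_one]
  have h_one : β ≠ 1 := hβ'.ne_one (by norm_num)
  have h_two : β ^ 2 ≠ 1 := hβ'.pow_ne_one_of_pos_of_lt (by norm_num) (by norm_num)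
  rw [gives3Design_iff_sum_quadraticChar_eq_zero hF (by norm_num)
    (isPrimitiveRoot_neg_of_odd hF (by decide) hβ') h_square]
  simp only [quadraticChar_one_sub_neg_pow h_neg hβ']
  rw [sum_tenthRootPattern_eq_zero_iff (quadraticChar_dichotomy (sub_ne_zero.2 h_one.symm))
    (quadraticChar_dichotomy (sub_ne_zero.2 h_two.symm))
    (quadraticChar_dichotomy (Ring.two_ne_zero hF)), quadraticChar_one_add h_one]
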